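/- arXiv:1305.1143 — 5 statements merged into one kernel-verified Lean document; each statement's English description precedes it below -/
import Mathlib

section
/- Let n ≥ 1, let χ be a function from the symmetric group S_n to ℂ, and let A ∈ M_n(ℂ). For every X ∈ M_n(ℂ), the directional derivative of the immanant map at A in the direction X satisfies D d_χ(A)(X) = tr(adj_χ(A)^T · X). -/
open scoped Classical
open Matrix

attribute [local instance] Matrix.normedAddCommGroup Matrix.normedSpace

noncomputable section

/-- The immanant `d_χ(A) = ∑_{σ ∈ S_n} χ(σ) ∏_i a_{i σ(i)}`. -/
def imm {n : ℕ} (χ : Equiv.Perm (Fin n) → ℂ) (A : Matrix (Fin n) (Fin n) ℂ) : ℂ :=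
  ∑ σ : Equiv.Perm (Fin n), χ σ * ∏ i, A i (σ i)

/-- `A(i|j)`: replace row `i` and column `j` of `A` by zeros, except the `(i,j)` entry,
which is set to `1`. -/
def unitRowCol {n : ℕ} (A : Matrix (Fin n) (Fin n) ℂ) (i j : Fin n) :
    Matrix (Fin n) (Fin n) ℂ :=
  Matrix.of fun p q => if p = i then (if q = j then 1 else 0) else if q = j then 0 else A p q

/-- The immanantal adjoint: its `(i,j)` entry is `d_χ(A(i|j))`. -/
def immAdj {n : ℕ} (χ : Equiv.Perm (Fin n) → ℂ) (A : Matrix (Fin n) (Fin n) ℂ) :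
    Matrix (Fin n) (Fin n) ℂ :=
  Matrix.of fun i j => imm χ (unitRowCol A i j)

/-- `A(j;X)`: replace the `j`-th column of `A` by the `j`-th column of `X`. -/
def replCol {n : ℕ} (A X : Matrix (Fin n) (Fin n) ℂ) (j : Fin n) :
    Matrix (Fin n) (Fin n) ℂ :=
  Matrix.of fun p q => if q = j then X p q else A p q

/-- `Q_{k,n}`: the strictly increasing maps from `Fin k` to `Fin n`. -/
def Qset (k n : ℕ) : Finset (Fin k → Fin n) := Finset.univ.filter StrictMono

/-- `A(α ; X^1, …, X^k)`: replace, for each `l`, the `α(l)`-th column of `A` by the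
`α(l)`-th column of `X^l`. -/
def replCols {n k : ℕ} (A : Matrix (Fin n) (Fin n) ℂ) (α : Fin k → Fin n)
    (X : Fin k → Matrix (Fin n) (Fin n) ℂ) : Matrix (Fin n) (Fin n) ℂ :=
  Matrix.of fun p q => if h : ∃ l, α l = q then X (Classical.choose h) p q else A p q

/-- The mixed immanant `Δ_χ(Y^1, …, Y^n)`. -/
def mixedImm {n : ℕ} (χ : Equiv.Perm (Fin n) → ℂ)
    (Y : Fin n → Matrix (Fin n) (Fin n) ℂ) : ℂ :=
  ((n.factorial : ℂ))⁻¹ * ∑ σ : Equiv.Perm (Fin n), imm χ (Matrix.of fun p q => Y (σ q) p q)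

/-- The family `(A, …, A, X^1, …, X^k)` with `n - k` copies of `A`. -/
def padFam {n k : ℕ} (A : Matrix (Fin n) (Fin n) ℂ) (X : Fin k → Matrix (Fin n) (Fin n) ℂ) :
    Fin n → Matrix (Fin n) (Fin n) ℂ :=
  fun i => if h : (i : ℕ) < n - k then A else X ⟨(i : ℕ) - (n - k), by have := i.isLt; omega⟩

/-- The increasing enumeration `ᾱ` of the complement of the range of `α`. -/
def complEnum {n k : ℕ} (α : Fin k → Fin n) : Fin (n - k) → Fin n :=
  if h : (Finset.univ.filter fun j => j ∉ Set.range α).card = n - k then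
    (Finset.univ.filter fun j => j ∉ Set.range α).orderEmbOfFin h
  else fun i => ⟨0, by have := i.isLt; omega⟩

/-- `X(α|β)`: the submatrix obtained by deleting rows `α(1), …, α(k)` and columns
`β(1), …, β(k)`. -/
def delSub {n k : ℕ} (X : Matrix (Fin n) (Fin n) ℂ) (α β : Fin k → Fin n) :
    Matrix (Fin (n - k)) (Fin (n - k)) ℂ :=
  X.submatrix (complEnum α) (complEnum β)

/-- `A ⊕_{α|β} B`. -/
def dSum {n k : ℕ} (α β : Fin k → Fin n) (A : Matrix (Fin k) (Fin k) ℂ)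
    (B : Matrix (Fin (n - k)) (Fin (n - k)) ℂ) : Matrix (Fin n) (Fin n) ℂ :=
  Matrix.of fun i j =>
    if hi : ∃ p, α p = i then
      (if hj : ∃ q, β q = j then A (Classical.choose hi) (Classical.choose hj) else 0)
    else if _hj : ∃ q, β q = j then 0
    else if hi' : ∃ p, complEnum α p = i then
      (if hj' : ∃ q, complEnum β q = j then B (Classical.choose hi') (Classical.choose hj')
       else 0)
    else 0

/-- `X{α|β}`: zero out the entries `(i,j)` with `i ∈ Im α, j ∉ Im β` and those with
`i ∉ Im α, j ∈ Im β`. -/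
def maskM {n k : ℕ} (X : Matrix (Fin n) (Fin n) ℂ) (α β : Fin k → Fin n) :
    Matrix (Fin n) (Fin n) ℂ :=
  Matrix.of fun i j =>
    if ((∃ p, α p = i) ∧ ¬ (∃ q, β q = j)) ∨ (¬ (∃ p, α p = i) ∧ (∃ q, β q = j)) then 0
    else X i j

/-- `X^σ_β`: the matrix whose `β(p)`-th column is the `β(p)`-th column of `X^{σ(p)}`,
all other columns being zero. -/
def zRepl {n k : ℕ} (β : Fin k → Fin n) (σ : Equiv.Perm (Fin k))
    (X : Fin k → Matrix (Fin n) (Fin n) ℂ) : Matrix (Fin n) (Fin n) ℂ :=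
  Matrix.of fun p q => if h : ∃ l, β l = q then X (σ (Classical.choose h)) p q else 0

/-- `|α| = α(1) + ⋯ + α(k)` (with `1`-based values). -/
def wt {k n : ℕ} (α : Fin k → Fin n) : ℕ := ∑ l, ((α l : ℕ) + 1)

/-- The mixed discriminant `Δ(B^1, …, B^k)`. -/
def mixedDisc {k : ℕ} (B : Fin k → Matrix (Fin k) (Fin k) ℂ) : ℂ :=
  ((k.factorial : ℂ))⁻¹ * ∑ σ : Equiv.Perm (Fin k), (Matrix.of fun p q => B (σ q) p q).det

/-- `A{id|β}`: zero out the entries of the first `k` rows in the columns outside `Im β`,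
and the entries of the remaining rows in the columns of `Im β`. -/
def maskId {n k : ℕ} (A : Matrix (Fin n) (Fin n) ℂ) (β : Fin k → Fin n) :
    Matrix (Fin n) (Fin n) ℂ :=
  Matrix.of fun i j =>
    if ((i : ℕ) < k ∧ j ∉ Set.range β) ∨ (k ≤ (i : ℕ) ∧ j ∈ Set.range β) then 0 else A i j

/-- The `m`-th compound of an `n × n` matrix, with rows and columns indexed by `Q_{m,n}`. -/
def compound (m n : ℕ) (A : Matrix (Fin n) (Fin n) ℂ) :
    Matrix {α : Fin m → Fin n // StrictMono α} {α : Fin m → Fin n // StrictMono α} ℂ :=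
  Matrix.of fun α β => (A.submatrix α.1 β.1).det

end

/-!
The immanant is multilinear in the rows of a matrix, so its derivative at `A` in the direction `X`
is the sum over `i` of the immanants of `A` with row `i` replaced by row `i` of `X`. Expanding that
row in the standard basis leaves immanants of `A` with row `i` replaced by a basis vector `e_j`.
Only permutations sending `i` to `j` contribute to these, and they meet column `j` nowhere else, so
the rest of column `j` may be cleared: the immanant becomes that of `A(i|j)`.
-/

section General

variable {ι : Type*} [Fintype ι] [DecidableEq ι]

section CommSemiring

variable {R : Type*} [CommSemiring R]

/-- The immanant `d_χ(A)` over an arbitrary commutative semiring and finite index type,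
generalizing `imm`. -/
def immanant (χ : Equiv.Perm ι → R) (A : Matrix ι ι R) : R :=
  ∑ σ : Equiv.Perm ι, χ σ * ∏ i, A i (σ i)

/-- The matrix `A(i|j)`, generalizing `unitRowCol`. Row `i` is overwritten after column `j`,
so that the `(i,j)` entry is `1`. -/
def isolateEntry (A : Matrix ι ι R) (i j : ι) : Matrix ι ι R :=
  (A.updateCol j 0).updateRow i (Pi.single j 1)

/-- The immanantal adjoint `adj_χ(A)`, generalizing `immAdj`. As in the paper, and unlike
`Matrix.adjugate`, it is not transposed. -/
def immanantAdjoint (χ : Equiv.Perm ι → R) (A : Matrix ι ι R) : Matrix ι ι R :=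
  Matrix.of fun i j ↦ immanant χ (isolateEntry A i j)

/-- The immanant as a multilinear map in the rows of a matrix, the analogue of
`Matrix.detRowAlternating`. -/
def immanantRowMultilinear (χ : Equiv.Perm ι → R) : MultilinearMap R (fun _ : ι ↦ ι → R) R :=
  ∑ σ : Equiv.Perm ι,
    χ σ • (MultilinearMap.mkPiAlgebra R ι R).compLinearMap fun i ↦ LinearMap.proj (σ i)

theorem immanantRowMultilinear_apply (χ : Equiv.Perm ι → R) (A : ι → ι → R) :
    immanantRowMultilinear χ A = immanant χ (Matrix.of A) := by
  simp [immanantRowMultilinear, immanant]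

theorem immanant_updateRow_single (χ : Equiv.Perm ι → R) (A : Matrix ι ι R) (i j : ι) :
    immanant χ (A.updateRow i (Pi.single j 1)) = immanantAdjoint χ A i j := by
  refine Finset.sum_congr rfl fun σ _ ↦ congrArg (χ σ * ·) ?_
  by_cases hσ : σ i = j
  · refine Finset.prod_congr rfl fun p _ ↦ ?_
    obtain rfl | hp := eq_or_ne p i
    · simp [isolateEntry]
    · have hpj : σ p ≠ j := hσ ▸ σ.injective.ne hp
      simp [isolateEntry, hp, hpj]
  · rw [Finset.prod_eq_zero (Finset.mem_univ i), Finset.prod_eq_zero (Finset.mem_univ i)] <;>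
      simp [isolateEntry, hσ]

theorem immanant_updateRow (χ : Equiv.Perm ι → R) (A : Matrix ι ι R) (i : ι) (x : ι → R) :
    immanant χ (A.updateRow i x) = ∑ j, x j * immanantAdjoint χ A i j := by
  let rowForm : (ι → R) →ₗ[R] R := (immanantRowMultilinear χ).toLinearMap A i
  have rowForm_apply (y : ι → R) : rowForm y = immanant χ (A.updateRow i y) :=
    immanantRowMultilinear_apply χ _
  calc
    immanant χ (A.updateRow i x) = rowForm (∑ j, x j • Pi.single j 1) := by
      rw [← pi_eq_sum_univ', rowForm_apply]
    _ = ∑ j, x j * rowForm (Pi.single j 1) := by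
      simp only [map_sum, map_smul, smul_eq_mul]
    _ = ∑ j, x j * immanantAdjoint χ A i j := by
      simp only [rowForm_apply, immanant_updateRow_single]

theorem sum_immanant_updateRow (χ : Equiv.Perm ι → R) (A X : Matrix ι ι R) :
    ∑ i, immanant χ (A.updateRow i (X i)) = Matrix.trace ((immanantAdjoint χ A)ᵀ * X) := by
  simp only [immanant_updateRow, Matrix.trace_mul_comm _ X, ← Matrix.sum_hadamard_eq,
    Matrix.hadamard_apply]

end CommSemiring

section IsTopologicalSemiring

variable {R : Type*} [CommSemiring R] [TopologicalSpace R] [IsTopologicalSemiring R]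

/-- The continuous version of `immanantRowMultilinear`, whose `linearDeriv` is the derivative of
the immanant. -/
def immanantRowContinuousMultilinear (χ : Equiv.Perm ι → R) :
    ContinuousMultilinearMap R (fun _ : ι ↦ ι → R) R where
  toMultilinearMap := immanantRowMultilinear χ
  cont := by
    have cont_immanant : Continuous fun A : ι → ι → R ↦ immanant χ (Matrix.of A) := by
      simp only [immanant, Matrix.of_apply]
      fun_prop
    exact cont_immanant.congr fun A ↦ (immanantRowMultilinear_apply χ A).symm

theorem immanantRowContinuousMultilinear_linearDeriv_apply (χ : Equiv.Perm ι → R)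
    (A X : Matrix ι ι R) :
    (immanantRowContinuousMultilinear χ).linearDeriv A X =
      Matrix.trace ((immanantAdjoint χ A)ᵀ * X) :=
  calc
    (immanantRowContinuousMultilinear χ).linearDeriv A X
    _ = ∑ i, immanantRowMultilinear χ (Function.update A i (X i)) :=
      (immanantRowContinuousMultilinear χ).linearDeriv_apply A X
    _ = ∑ i, immanant χ (A.updateRow i (X i)) :=
      Finset.sum_congr rfl fun _ _ ↦ immanantRowMultilinear_apply χ _
    _ = Matrix.trace ((immanantAdjoint χ A)ᵀ * X) := sum_immanant_updateRow χ A X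

/-- The continuous linear functional `X ↦ tr(B X)`, for expressing derivatives of scalar
functions of a matrix. -/
def traceMulLeft (B : Matrix ι ι R) : Matrix ι ι R →L[R] R where
  toLinearMap := Matrix.traceLinearMap ι R R ∘ₗ mulLeftLinearMap ι R B
  cont := (continuous_const.matrix_mul continuous_id).matrix_trace

end IsTopologicalSemiring

theorem immanant_deriv_trace_adj_general {𝕜 : Type*} [NontriviallyNormedField 𝕜]
    (χ : Equiv.Perm ι → 𝕜) (A : Matrix ι ι 𝕜) :
    HasFDerivAt (immanant χ) (traceMulLeft (immanantAdjoint χ A)ᵀ) A :=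
  have hasFDerivAt_linearDeriv : HasFDerivAt (immanant χ)
      ((immanantRowContinuousMultilinear χ).linearDeriv A) A :=
    ((immanantRowContinuousMultilinear χ).hasFDerivAt A).congr_of_eventuallyEq
      (.of_forall fun B ↦ (immanantRowMultilinear_apply χ B).symm)
  hasFDerivAt_linearDeriv.congr_fderiv <| ContinuousLinearMap.ext <|
    immanantRowContinuousMultilinear_linearDeriv_apply χ A

end General

theorem unitRowCol_eq_isolateEntry {n : ℕ} (A : Matrix (Fin n) (Fin n) ℂ) (i j : Fin n) :
    unitRowCol A i j = isolateEntry A i j := by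
  ext p q
  simp [unitRowCol, isolateEntry, Matrix.updateRow_apply, Matrix.updateCol_apply, Pi.single_apply]

theorem immAdj_eq_immanantAdjoint {n : ℕ} (χ : Equiv.Perm (Fin n) → ℂ)
    (A : Matrix (Fin n) (Fin n) ℂ) : immAdj χ A = immanantAdjoint χ A := by
  ext i j
  exact congrArg (imm χ) (unitRowCol_eq_isolateEntry A i j)

/-- For every `X`, the directional derivative of the immanant at `A`
in the direction `X` is `tr(adj_χ(A)ᵀ ⬝ X)`. -/
theorem immanant_deriv_trace_adj (n : ℕ) (hn : 1 ≤ n) (χ : Equiv.Perm (Fin n) → ℂ)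
    (A : Matrix (Fin n) (Fin n) ℂ) :
    ∀ X : Matrix (Fin n) (Fin n) ℂ,
      fderiv ℂ (imm χ) A X = Matrix.trace ((immAdj χ A)ᵀ * X) := by
  intro X
  rw [immAdj_eq_immanantAdjoint]
  exact DFunLike.congr_fun (immanant_deriv_trace_adj_general χ A).fderiv X
end

section
/- Let n ≥ 1, let χ be a function from the symmetric group S_n to ℂ, and let A, X = (x_{ij}) ∈ M_n(ℂ). Then the directional derivative of the immanant satisfies D d_χ(A)(X) = Σ_{i=1}^n Σ_{j=1}^n x_{ij} · d_χ(A(i|j)). -/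
open scoped Classical

attribute [local instance] Matrix.normedAddCommGroup Matrix.normedSpace

/-!
Differentiating `∏ i, a_{i σ(i)}` by the Leibniz rule gives one term for each row `i`, in which the
factor `a_{i σ(i)}` is replaced by `x_{i σ(i)}`. The products that survive in `d_χ(A(i|j))` are
those with `σ(i) = j`, each stripped of its factor in row `i`; so sorting the Leibniz terms by the
value `j = σ(i)` makes `d_χ(A(i|j))` the coefficient of `x_{ij}`.
-/

/-- The `(i, j)` entry of a matrix, as a continuous linear map: the coordinates in which
derivatives of functions of a matrix are expressed. -/
def entryCLM {m n : Type*} (R α : Type*) [Semiring R] [AddCommMonoid α] [Module R α]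
    [TopologicalSpace α] (i : m) (j : n) : Matrix m n α →L[R] α where
  toLinearMap := Matrix.entryLinearMap R α i j
  cont := continuous_id.matrix_elem i j

@[simp]
theorem entryCLM_apply {m n R α : Type*} [Semiring R] [AddCommMonoid α] [Module R α]
    [TopologicalSpace α] (i : m) (j : n) (A : Matrix m n α) : entryCLM R α i j A = A i j :=
  rfl

theorem hasFDerivAt_prod_entries {m n 𝕜 𝔸 : Type*} [Fintype m] [DecidableEq m] [Finite n]
    [NontriviallyNormedField 𝕜] [NormedCommRing 𝔸] [NormedAlgebra 𝕜 𝔸]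
    (f : m → n) (A : Matrix m n 𝔸) :
    HasFDerivAt (fun B : Matrix m n 𝔸 => ∏ i, B i (f i))
      (∑ i, (∏ p ∈ Finset.univ.erase i, A p (f p)) • entryCLM 𝕜 𝔸 i (f i)) A := by
  have := Fintype.ofFinite n
  exact HasFDerivAt.finsetProd fun i _ => (entryCLM 𝕜 𝔸 i (f i)).hasFDerivAt

section Immanant

variable {n : ℕ} (χ : Equiv.Perm (Fin n) → ℂ) (A : Matrix (Fin n) (Fin n) ℂ)

theorem prod_unitRowCol (i j : Fin n) (σ : Equiv.Perm (Fin n)) :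
    ∏ p, unitRowCol A i j p (σ p) =
      if σ i = j then ∏ p ∈ Finset.univ.erase i, A p (σ p) else 0 := by
  rw [← Finset.mul_prod_erase _ _ (Finset.mem_univ i)]
  split_ifs with hσ
  · have pivot_eq_one : unitRowCol A i j i (σ i) = 1 := by simp [unitRowCol, hσ]
    have off_pivot_eq (p : Fin n) (hp : p ≠ i) : unitRowCol A i j p (σ p) = A p (σ p) := by
      simp [unitRowCol, ← hσ, hp]
    rw [pivot_eq_one, one_mul]
    exact Finset.prod_congr rfl fun p hp => off_pivot_eq p (Finset.ne_of_mem_erase hp)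
  · have pivot_eq_zero : unitRowCol A i j i (σ i) = 0 := by simp [unitRowCol, hσ]
    rw [pivot_eq_zero, zero_mul]

theorem imm_unitRowCol (i j : Fin n) :
    imm χ (unitRowCol A i j) =
      ∑ σ : Equiv.Perm (Fin n) with σ i = j, χ σ * ∏ p ∈ Finset.univ.erase i, A p (σ p) := by
  simp only [imm, prod_unitRowCol, mul_ite, mul_zero, Finset.sum_filter]

/-- With `v = A i` this is the expansion of the immanant along row `i`. -/
theorem sum_imm_unitRowCol_smul {V : Type*} [AddCommMonoid V] [Module ℂ V] (i : Fin n)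
    (v : Fin n → V) :
    ∑ j, imm χ (unitRowCol A i j) • v j =
      ∑ σ : Equiv.Perm (Fin n), (χ σ * ∏ p ∈ Finset.univ.erase i, A p (σ p)) • v (σ i) := by
  rw [← Finset.sum_fiberwise _ fun σ : Equiv.Perm (Fin n) => σ i]
  refine Finset.sum_congr rfl fun j _ => ?_
  rw [imm_unitRowCol, Finset.sum_smul]
  refine Finset.sum_congr rfl fun σ hσ => ?_
  rw [(Finset.mem_filter.mp hσ).2]

theorem hasFDerivAt_imm :
    HasFDerivAt (imm χ) (∑ i, ∑ j, imm χ (unitRowCol A i j) • entryCLM ℂ ℂ i j) A := by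
  have leibniz : HasFDerivAt (imm χ)
      (∑ σ : Equiv.Perm (Fin n),
        χ σ • ∑ i, (∏ p ∈ Finset.univ.erase i, A p (σ p)) • entryCLM ℂ ℂ i (σ i)) A :=
    HasFDerivAt.fun_sum fun σ _ => (hasFDerivAt_prod_entries σ A).const_mul (χ σ)
  refine leibniz.congr_fderiv ?_
  simp only [sum_imm_unitRowCol_smul, Finset.smul_sum, smul_smul]
  exact Finset.sum_comm

end Immanant

/-- `D d_χ(A)(X) = ∑_{i=1}^n ∑_{j=1}^n x_{ij} d_χ(A(i|j))`. -/
theorem immanant_deriv_entrywise (n : ℕ) (hn : 1 ≤ n) (χ : Equiv.Perm (Fin n) → ℂ)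
    (A X : Matrix (Fin n) (Fin n) ℂ) :
    fderiv ℂ (imm χ) A X = ∑ i : Fin n, ∑ j : Fin n, X i j * imm χ (unitRowCol A i j) := by
  rw [(hasFDerivAt_imm χ A).fderiv]
  simp only [sum_apply, smul_apply, entryCLM_apply, smul_eq_mul, mul_comm]
end

section
/- (First expression.) Let n ≥ 1, let χ be a function from the symmetric group S_n to ℂ, let 1 ≤ k ≤ n, and let A, X^1, …, X^k ∈ M_n(ℂ). Then the k-th directional derivative of the immanant satisfies D^k d_χ(A)(X^1,…,X^k) = Σ_{σ∈S_k} Σ_{α∈Q_{k,n}} d_χ(A(α; X^{σ(1)},…,X^{σ(k)})). In particular, D^k d_χ(A)(X,…,X) = k! · Σ_{α∈Q_{k,n}} d_χ(A(α; X,…,X)). -/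
open scoped Classical

attribute [local instance] Matrix.normedAddCommGroup Matrix.normedSpace

/-!
The immanant is a multilinear function of the columns of the matrix, so its `k`-th derivative is
a sum over the injections `e : Fin k ↪ Fin n`, where column `e l` of `A` is replaced by column
`e l` of `X l`. Sorting factors each injection uniquely as a strictly increasing map after a
permutation, and the permutation can be moved from the columns to the matrices `X l`.
-/

open Function

section MultilinearDerivative

variable {𝕜 ι E F G : Type*} [NontriviallyNormedField 𝕜] [Fintype ι]
  [NormedAddCommGroup E] [NormedSpace 𝕜 E] [NormedAddCommGroup F] [NormedSpace 𝕜 F]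
  [NormedAddCommGroup G] [NormedSpace 𝕜 G]

theorem iteratedFDeriv_multilinear_apply (f : ContinuousMultilinearMap 𝕜 (fun _ : ι => E) F)
    (k : ℕ) (x : ι → E) (v : Fin k → ι → E) :
    iteratedFDeriv 𝕜 k f x v =
      ∑ e : Fin k ↪ ι, f (extend e (fun l => v l (e l)) x) := by
  simp only [f.iteratedFDeriv_eq, ContinuousMultilinearMap.iteratedFDeriv, sum_apply,
    ContinuousMultilinearMap.iteratedFDerivComponent_apply]
  refine Finset.sum_congr rfl fun e _ => congrArg f (funext fun i => ?_)
  by_cases hi : i ∈ Set.range e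
  · obtain ⟨l, rfl⟩ := hi
    simp [e.injective.extend_apply]
  · rw [dif_neg hi, extend_apply' _ _ _ hi]
    rfl

theorem iteratedFDeriv_multilinear_comp_clm_apply
    (f : ContinuousMultilinearMap 𝕜 (fun _ : ι => E) F) (L : G →L[𝕜] ι → E) (k : ℕ) (x : G)
    (v : Fin k → G) :
    iteratedFDeriv 𝕜 k (f ∘ L) x v =
      ∑ e : Fin k ↪ ι, f (extend e (fun l => L (v l) (e l)) (L x)) := by
  rw [L.iteratedFDeriv_comp_right f.contDiff x le_rfl,
    ContinuousMultilinearMap.compContinuousLinearMap_apply, iteratedFDeriv_multilinear_apply]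

end MultilinearDerivative

section SortingInjections

variable {ι : Type*} [LinearOrder ι] {k : ℕ}

theorem sort_strictMono_comp_symm {α : Fin k → ι} (hα : StrictMono α)
    (σ : Equiv.Perm (Fin k)) : Tuple.sort (α ∘ σ.symm) = σ := by
  refine (Tuple.eq_sort_iff.2 ⟨?_, fun i j hij h => ?_⟩).symm
  · simpa [comp_assoc] using hα.monotone
  · simp [hα.injective.eq_iff, hij.ne] at h

/-- The factorization of an injection `Fin k ↪ ι` as a strictly increasing map after a permutation
of `Fin k`. The permutation recorded is the sorting one, whose inverse is the factor. -/
def embeddingEquivPermProdStrictMono :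
    (Fin k ↪ ι) ≃ Equiv.Perm (Fin k) × {α : Fin k → ι // StrictMono α} where
  toFun e := (Tuple.sort e, ⟨e ∘ Tuple.sort e, (Tuple.monotone_sort e).strictMono_of_injective
    (e.injective.comp (Tuple.sort e).injective)⟩)
  invFun p := ⟨p.2 ∘ p.1.symm, p.2.2.injective.comp p.1.symm.injective⟩
  left_inv e := by
    ext l
    simp
  right_inv := by
    rintro ⟨σ, α, hα⟩
    simp [sort_strictMono_comp_symm hα, comp_assoc]

theorem sum_embedding_eq_sum_perm_sum_strictMono {M : Type*} [AddCommMonoid M] [Fintype ι]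
    (F : (Fin k → ι) → M) :
    ∑ e : Fin k ↪ ι, F e =
      ∑ σ : Equiv.Perm (Fin k), ∑ α : Fin k → ι with StrictMono α, F (α ∘ σ.symm) := by
  calc
    ∑ e : Fin k ↪ ι, F e
      = ∑ p : Equiv.Perm (Fin k) × {α : Fin k → ι // StrictMono α}, F (p.2 ∘ p.1.symm) :=
        (embeddingEquivPermProdStrictMono.symm.sum_comp fun e : Fin k ↪ ι => F e).symm
    _ = ∑ σ : Equiv.Perm (Fin k), ∑ α : Fin k → ι with StrictMono α, F (α ∘ σ.symm) := by
        rw [Fintype.sum_prod_type]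
        exact Finset.sum_congr rfl fun σ _ =>
          (Finset.sum_subtype _ (by simp) fun α => F (α ∘ σ.symm)).symm

end SortingInjections

theorem extend_comp_equiv_symm {ι κ γ δ : Type*} {f : ι → γ} (hf : Injective f) (σ : ι ≃ κ)
    (g : κ → δ) (h : γ → δ) : extend (f ∘ σ.symm) g h = extend f (g ∘ σ) h := by
  rw [σ.symm.injective.extend_comp hf]
  congr 1
  funext i
  simp

/-- The family of columns of a matrix, as a continuous linear function of the matrix. -/
def colCLM (R m n : Type*) [Semiring R] [TopologicalSpace R] :
    Matrix m n R →L[R] (n → m → R) where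
  toFun := Matrix.col
  map_add' _ _ := rfl
  map_smul' _ _ := rfl
  cont := continuous_id.matrix_transpose

section Immanant

variable {n k : ℕ}

theorem col_replCols (A : Matrix (Fin n) (Fin n) ℂ) (α : Fin k → Fin n)
    (X : Fin k → Matrix (Fin n) (Fin n) ℂ) :
    (replCols A α X).col = extend α (fun l => (X l).col (α l)) A.col := by
  ext q p
  by_cases hq : ∃ l, α l = q
  · simp [replCols, extend_def, hq, hq.choose_spec]
  · simp [replCols, hq]

theorem replCols_comp_symm (A : Matrix (Fin n) (Fin n) ℂ) {α : Fin k → Fin n}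
    (hα : Injective α) (X : Fin k → Matrix (Fin n) (Fin n) ℂ) (σ : Equiv.Perm (Fin k)) :
    replCols A (α ∘ σ.symm) X = replCols A α (X ∘ σ) := by
  refine Matrix.ext_col fun q => ?_
  rw [col_replCols, col_replCols, extend_comp_equiv_symm hα]
  simp only [comp_def, Equiv.symm_apply_apply]

/-- The immanant as a continuous multilinear function of the columns. The factor of column `j` in
the term of `σ` sits in row `σ⁻¹ j`, since `imm` indexes its products by rows. -/
noncomputable def immMultilinear (χ : Equiv.Perm (Fin n) → ℂ) :
    ContinuousMultilinearMap ℂ (fun _ : Fin n => Fin n → ℂ) ℂ :=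
  ∑ σ : Equiv.Perm (Fin n), χ σ •
    (ContinuousMultilinearMap.mkPiAlgebra ℂ (Fin n) ℂ).compContinuousLinearMap
      fun j => ContinuousLinearMap.proj (σ.symm j)

theorem immMultilinear_col (χ : Equiv.Perm (Fin n) → ℂ) (A : Matrix (Fin n) (Fin n) ℂ) :
    immMultilinear χ A.col = imm χ A := by
  simp only [immMultilinear, imm, sum_apply, smul_apply, smul_eq_mul,
    ContinuousMultilinearMap.compContinuousLinearMap_apply,
    ContinuousMultilinearMap.mkPiAlgebra_apply, ContinuousLinearMap.proj_apply, Matrix.col_apply]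
  refine Finset.sum_congr rfl fun σ _ => ?_
  rw [← Equiv.prod_comp σ]
  simp only [Equiv.symm_apply_apply]

theorem iteratedFDeriv_imm_apply (χ : Equiv.Perm (Fin n) → ℂ)
    (A : Matrix (Fin n) (Fin n) ℂ) (X : Fin k → Matrix (Fin n) (Fin n) ℂ) :
    iteratedFDeriv ℂ k (imm χ) A X = ∑ e : Fin k ↪ Fin n, imm χ (replCols A e X) := by
  have himm : imm χ = immMultilinear χ ∘ colCLM ℂ (Fin n) (Fin n) :=
    funext fun B => (immMultilinear_col χ B).symm
  calc
    iteratedFDeriv ℂ k (imm χ) A X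
      = iteratedFDeriv ℂ k (immMultilinear χ ∘ colCLM ℂ (Fin n) (Fin n)) A X := by rw [himm]
    _ = ∑ e : Fin k ↪ Fin n, immMultilinear χ (extend e (fun l => (X l).col (e l)) A.col) :=
        iteratedFDeriv_multilinear_comp_clm_apply (immMultilinear χ) (colCLM ℂ (Fin n) (Fin n)) k
          A X
    _ = ∑ e : Fin k ↪ Fin n, imm χ (replCols A e X) := by
        simp only [← col_replCols, immMultilinear_col]

end Immanant

/-- First expression. For `1 ≤ k ≤ n`,
`D^k d_χ(A)(X^1, …, X^k) = ∑_{σ ∈ S_k} ∑_{α ∈ Q_{k,n}} d_χ(A(α; X^{σ(1)}, …, X^{σ(k)}))`;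
in particular `D^k d_χ(A)(X, …, X) = k! ∑_{α ∈ Q_{k,n}} d_χ(A(α; X, …, X))`. -/
theorem immanant_higher_deriv_first_expression (n k : ℕ) (hk : 1 ≤ k) (hkn : k ≤ n)
    (χ : Equiv.Perm (Fin n) → ℂ) (A : Matrix (Fin n) (Fin n) ℂ)
    (X : Fin k → Matrix (Fin n) (Fin n) ℂ) :
    (iteratedFDeriv ℂ k (imm χ) A (fun i => X i) =
      ∑ σ : Equiv.Perm (Fin k), ∑ α ∈ Qset k n, imm χ (replCols A α (fun l => X (σ l)))) ∧
    ∀ Y : Matrix (Fin n) (Fin n) ℂ,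
      iteratedFDeriv ℂ k (imm χ) A (fun _ => Y) =
        (k.factorial : ℂ) * ∑ α ∈ Qset k n, imm χ (replCols A α (fun _ => Y)) := by
  have hsum (Z : Fin k → Matrix (Fin n) (Fin n) ℂ) : iteratedFDeriv ℂ k (imm χ) A Z =
      ∑ σ : Equiv.Perm (Fin k), ∑ α ∈ Qset k n, imm χ (replCols A α (fun l => Z (σ l))) := by
    rw [iteratedFDeriv_imm_apply,
      sum_embedding_eq_sum_perm_sum_strictMono fun e => imm χ (replCols A e Z)]
    refine Finset.sum_congr rfl fun σ _ => Finset.sum_congr rfl fun α hα => ?_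
    have hinj : Injective α := (Finset.mem_filter.1 hα).2.injective
    rw [replCols_comp_symm A hinj, comp_def]
  refine ⟨hsum X, fun Y => ?_⟩
  rw [hsum, Finset.sum_const, Finset.card_univ, Fintype.card_perm, Fintype.card_fin,
    nsmul_eq_mul]
end

section
/- (First expression, rewritten.) Let n ≥ 1, let χ be a function from the symmetric group S_n to ℂ, let 1 ≤ k ≤ n, and let A, X^1, …, X^k ∈ M_n(ℂ). Then D^k d_χ(A)(X^1,…,X^k) = (n!/(n−k)!) · Δ_χ(A; X^1,…,X^k), where Δ_χ(A; X^1,…,X^k) is the mixed immanant of n−k copies of A together with X^1,…,X^k. -/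
open scoped Classical

attribute [local instance] Matrix.normedAddCommGroup Matrix.normedSpace

/-!
The mixed immanant is a symmetric multilinear function `Δ_χ` of `n` matrices whose restriction to
the diagonal is the immanant. Differentiating `x ↦ f (x, …, x)` `k` times, for `f` multilinear,
gives one term for each injection of the `k` directions into the arguments of `f`. When `f` is
symmetric these terms coincide, and for `n` arguments there are `n! / (n - k)!` of them.
-/

section Diagonal

open Function

theorem exists_perm_extend_comp_eq {α β γ : Type*} [Finite α] (e e' : α ↪ β) (v : α → γ) (c : γ) :
    ∃ σ : Equiv.Perm β, extend e' v (fun _ => c) ∘ σ = extend e v fun _ => c := by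
  obtain ⟨σ, hσ⟩ := Equiv.Perm.exists_extending_pair e e' e.injective e'.injective
  refine ⟨σ, ?_⟩
  rw [← funext hσ, ← comp_def, e.injective.extend_comp σ.injective, extend_comp σ.injective]
  rfl

variable {𝕜 ι E F : Type*} [NontriviallyNormedField 𝕜] [Fintype ι] [NormedAddCommGroup E]
  [NormedSpace 𝕜 E] [NormedAddCommGroup F] [NormedSpace 𝕜 F] {k : ℕ}

theorem iteratedFDeriv_diagonal_eq_sum_extend
    (f : ContinuousMultilinearMap 𝕜 (fun _ : ι => E) F) (x : E) (v : Fin k → E) :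
    iteratedFDeriv 𝕜 k (fun y => f fun _ => y) x v =
      ∑ e : Fin k ↪ ι, f (extend e v fun _ => x) := by
  let diagonal : E →L[𝕜] (ι → E) := .pi fun _ => .id 𝕜 E
  change iteratedFDeriv 𝕜 k (f ∘ diagonal) x v = _
  rw [diagonal.iteratedFDeriv_comp_right f.contDiff x le_rfl, f.iteratedFDeriv_eq]
  simp only [ContinuousMultilinearMap.iteratedFDeriv,
    ContinuousMultilinearMap.compContinuousLinearMap_apply, sum_apply,
    ContinuousMultilinearMap.iteratedFDerivComponent_apply, Pi.compRightL_apply]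
  refine Finset.sum_congr rfl fun e _ => congrArg f (funext fun i => ?_)
  by_cases hi : i ∈ Set.range e
  · obtain ⟨l, rfl⟩ := hi
    simp [diagonal, e.injective.extend_apply]
  · rw [dif_neg hi, extend_apply' _ _ _ hi]
    rfl

theorem iteratedFDeriv_diagonal_eq_descFactorial_nsmul
    (f : ContinuousMultilinearMap 𝕜 (fun _ : ι => E) F)
    (hf : ∀ (σ : Equiv.Perm ι) (m : ι → E), f (m ∘ σ) = f m) (e : Fin k ↪ ι) (x : E)
    (v : Fin k → E) :
    iteratedFDeriv 𝕜 k (fun y => f fun _ => y) x v =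
      (Fintype.card ι).descFactorial k • f (extend e v fun _ => x) := by
  have summand_eq (e' : Fin k ↪ ι) : f (extend e' v fun _ => x) = f (extend e v fun _ => x) := by
    obtain ⟨σ, hσ⟩ := exists_perm_extend_comp_eq e' e v x
    rw [← hσ, hf]
  simp only [iteratedFDeriv_diagonal_eq_sum_extend, summand_eq, Finset.sum_const, Finset.card_univ,
    Fintype.card_embedding_eq, Fintype.card_fin]

end Diagonal

section MixedImmanant

variable {n : ℕ} (χ : Equiv.Perm (Fin n) → ℂ)

/-- The mixed immanant, bundled as a continuous multilinear map so that the differential calculus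
of multilinear maps applies to it. The products run over the matrices rather than over the rows as
in `imm`: the `i`-th matrix supplies column `σ⁻¹ i`, whose entry in row `τ⁻¹ (σ⁻¹ i)` is taken. -/
noncomputable def mixedImmMultilinear :
    ContinuousMultilinearMap ℂ (fun _ : Fin n => Matrix (Fin n) (Fin n) ℂ) ℂ :=
  (n.factorial : ℂ)⁻¹ • ∑ σ : Equiv.Perm (Fin n), ∑ τ : Equiv.Perm (Fin n), χ τ •
    (ContinuousMultilinearMap.mkPiAlgebra ℂ (Fin n) ℂ).compContinuousLinearMap fun i =>
      (Matrix.entryLinearMap ℂ ℂ (τ.symm (σ.symm i)) (σ.symm i)).toContinuousLinearMap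

theorem mixedImmMultilinear_apply (Y : Fin n → Matrix (Fin n) (Fin n) ℂ) :
    mixedImmMultilinear χ Y = mixedImm χ Y := by
  simp only [mixedImmMultilinear, mixedImm, imm, smul_apply, sum_apply, smul_eq_mul,
    ContinuousMultilinearMap.compContinuousLinearMap_apply,
    ContinuousMultilinearMap.mkPiAlgebra_apply, LinearMap.coe_toContinuousLinearMap',
    Matrix.entryLinearMap_apply, Matrix.of_apply]
  refine congrArg _ (Finset.sum_congr rfl fun σ _ => Finset.sum_congr rfl fun τ _ => ?_)
  rw [← Equiv.prod_comp (τ.trans σ)]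
  simp only [Equiv.trans_apply, Equiv.symm_apply_apply]

theorem mixedImm_comp_perm (σ : Equiv.Perm (Fin n)) (Y : Fin n → Matrix (Fin n) (Fin n) ℂ) :
    mixedImm χ (Y ∘ σ) = mixedImm χ Y :=
  congrArg ((n.factorial : ℂ)⁻¹ * ·) <|
    Equiv.sum_comp (Equiv.mulLeft σ) fun τ => imm χ (.of fun p q => Y (τ q) p q)

theorem mixedImm_const (A : Matrix (Fin n) (Fin n) ℂ) : mixedImm χ (fun _ => A) = imm χ A := by
  have factorial_ne_zero : (n.factorial : ℂ) ≠ 0 := Nat.cast_ne_zero.mpr n.factorial_ne_zero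
  change (n.factorial : ℂ)⁻¹ * ∑ _σ : Equiv.Perm (Fin n), imm χ A = imm χ A
  rw [Finset.sum_const, Finset.card_univ, Fintype.card_perm, Fintype.card_fin, nsmul_eq_mul,
    inv_mul_cancel_left₀ factorial_ne_zero]

theorem iteratedFDeriv_imm {k : ℕ} (e : Fin k ↪ Fin n) (A : Matrix (Fin n) (Fin n) ℂ)
    (X : Fin k → Matrix (Fin n) (Fin n) ℂ) :
    iteratedFDeriv ℂ k (imm χ) A X =
      n.descFactorial k * mixedImm χ (Function.extend e X fun _ => A) := by
  have imm_eq_diagonal : imm χ = fun B => mixedImmMultilinear χ fun _ => B :=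
    funext fun B => by rw [mixedImmMultilinear_apply, mixedImm_const]
  have comp_perm_eq (σ : Equiv.Perm (Fin n)) (Y : Fin n → Matrix (Fin n) (Fin n) ℂ) :
      mixedImmMultilinear χ (Y ∘ σ) = mixedImmMultilinear χ Y := by
    simp only [mixedImmMultilinear_apply, mixedImm_comp_perm]
  rw [imm_eq_diagonal]
  calc
    _ = (Fintype.card (Fin n)).descFactorial k •
        mixedImmMultilinear χ (Function.extend e X fun _ => A) :=
      iteratedFDeriv_diagonal_eq_descFactorial_nsmul _ comp_perm_eq e A X
    _ = _ := by rw [Fintype.card_fin, mixedImmMultilinear_apply, nsmul_eq_mul]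

end MixedImmanant

theorem padFam_eq_extend_natAdd {m k : ℕ} (A : Matrix (Fin (m + k)) (Fin (m + k)) ℂ)
    (X : Fin k → Matrix (Fin (m + k)) (Fin (m + k)) ℂ) :
    padFam A X = Function.extend (Fin.natAdd m) X fun _ => A := by
  funext i
  induction i using Fin.addCases with
  | left i =>
    have not_mem_range : ¬∃ l : Fin k, Fin.natAdd m l = Fin.castAdd k i := by
      rintro ⟨l, hl⟩
      exact (Nat.lt_add_right l i.isLt).ne' (congrArg Fin.val hl)
    rw [Function.extend_apply' _ _ _ not_mem_range]
    simp [padFam]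
  | right l =>
    rw [(Fin.natAdd_injective k m).extend_apply]
    simp [padFam]

/-- First expression, rewritten. For `1 ≤ k ≤ n`,
`D^k d_χ(A)(X^1, …, X^k) = (n!/(n-k)!) Δ_χ(A; X^1, …, X^k)`. -/
theorem immanant_higher_deriv_mixedImm (n k : ℕ) (hk : 1 ≤ k) (hkn : k ≤ n)
    (χ : Equiv.Perm (Fin n) → ℂ) (A : Matrix (Fin n) (Fin n) ℂ)
    (X : Fin k → Matrix (Fin n) (Fin n) ℂ) :
    iteratedFDeriv ℂ k (imm χ) A (fun i => X i) =
      ((n.factorial / (n - k).factorial : ℕ) : ℂ) * mixedImm χ (padFam A X) := by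
  obtain ⟨m, rfl⟩ := Nat.exists_eq_add_of_le' hkn
  rw [padFam_eq_extend_natAdd, ← Nat.descFactorial_eq_div hkn]
  exact iteratedFDeriv_imm χ (Fin.natAddEmb m) A X
end

section
/- (Laplace expansion for immanants.) Let 1 ≤ k ≤ n, let χ be a function from S_n to ℂ, let X ∈ M_n(ℂ), and fix α ∈ Q_{k,n}. Then d_χ(X) = Σ_{β∈Q_{k,n}} d_χ(X{α|β}), where X{α|β} is obtained from X by setting to zero every entry (i,j) with i ∈ Im α and j ∉ Im β, and every entry (i,j) with i ∉ Im α and j ∈ Im β; equivalently, d_χ(X) = Σ_{β∈Q_{k,n}} d_χ(X[α|β] ⊕_{α|β} X(α|β)). -/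
open scoped Classical

attribute [local instance] Matrix.normedAddCommGroup Matrix.normedSpace

/-!
A permutation `σ` carries the `k`-set `Im α` onto exactly one `k`-set, hence onto `Im β` for exactly
one `β ∈ Q_{k,n}`. For this `β` every entry `(i, σ i)` of `X` survives in `X{α|β}`; for any other
`β` at least one of them is replaced by zero. So each term of `d_χ(X)` occurs once on the right.
-/

section BlockMask

variable {ι κ R : Type*}

lemma map_equiv_eq_iff_forall_mem_iff (σ : ι ≃ κ) (s : Finset ι) (t : Finset κ) :
    s.map σ.toEmbedding = t ↔ ∀ i, i ∈ s ↔ σ i ∈ t := by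
  rw [Finset.ext_iff, ← σ.forall_congr_right]
  simp only [Finset.mem_map_equiv, Equiv.symm_apply_apply]

variable [DecidableEq ι] [DecidableEq κ]

/-- The matrix obtained from `X` by keeping the entries in the two complementary blocks `s × t` and
`sᶜ × tᶜ` and setting all the others to zero. This is `X{α|β}` with `s = Im α` and `t = Im β`. -/
def blockMask [Zero R] (X : Matrix ι κ R) (s : Finset ι) (t : Finset κ) : Matrix ι κ R :=
  Matrix.of fun i j => if i ∈ s ↔ j ∈ t then X i j else 0

lemma prod_blockMask_apply [Fintype ι] [CommMonoidWithZero R] (X : Matrix ι κ R) (s : Finset ι)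
    (t : Finset κ) (σ : ι ≃ κ) :
    ∏ i, blockMask X s t i (σ i) =
      if s.map σ.toEmbedding = t then ∏ i, X i (σ i) else 0 := by
  simp only [blockMask, Matrix.of_apply, Fintype.prod_ite_zero, map_equiv_eq_iff_forall_mem_iff]

theorem sum_mul_prod_eq_sum_powersetCard_blockMask [Fintype ι] [Fintype κ] [CommSemiring R]
    (χ : ι ≃ κ → R) (X : Matrix ι κ R) {s : Finset ι} {k : ℕ} (hs : s.card = k) :
    ∑ σ, χ σ * ∏ i, X i (σ i) =
      ∑ t ∈ Finset.univ.powersetCard k, ∑ σ, χ σ * ∏ i, blockMask X s t i (σ i) := by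
  rw [Finset.sum_comm]
  refine Finset.sum_congr rfl fun σ _ => ?_
  have hσs : s.map σ.toEmbedding ∈ Finset.univ.powersetCard k :=
    Finset.mem_powersetCard_univ.mpr ((Finset.card_map _).trans hs)
  simp only [prod_blockMask_apply, mul_ite, mul_zero, Finset.sum_ite_eq, if_pos hσs]

end BlockMask

section IncreasingMaps

variable {k n : ℕ}

lemma mem_Qset {β : Fin k → Fin n} : β ∈ Qset k n ↔ StrictMono β := by
  simp only [Qset, Finset.mem_filter_univ]

lemma sum_Qset_image {M : Type*} [AddCommMonoid M] (f : Finset (Fin n) → M) :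
    ∑ β ∈ Qset k n, f (Finset.univ.image β) = ∑ t ∈ Finset.univ.powersetCard k, f t := by
  refine Finset.sum_nbij (fun β => Finset.univ.image β) (fun β hβ => ?_)
    (fun β hβ γ hγ h => ?_) (fun t ht => ?_) fun _ _ => rfl
  · rw [Finset.mem_powersetCard_univ,
      Finset.card_image_of_injective _ (mem_Qset.mp hβ).injective, Finset.card_fin]
  · have hrange : Set.range β = Set.range γ := by
      simpa only [Finset.coe_image, Finset.coe_univ, Set.image_univ] using
        congrArg (fun t : Finset (Fin n) => (t : Set (Fin n))) h
    exact ((mem_Qset.mp hβ).range_inj (mem_Qset.mp hγ)).mp hrange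
  · have hcard : t.card = k := Finset.mem_powersetCard_univ.mp ht
    exact ⟨t.orderEmbOfFin hcard, mem_Qset.mpr (t.orderEmbOfFin hcard).strictMono,
      t.image_orderEmbOfFin_univ hcard⟩

lemma range_complEnum {α : Fin k → Fin n} (hα : Function.Injective α) :
    Set.range (complEnum α) = (Set.range α)ᶜ := by
  have hcompl : (Finset.univ.filter fun j => j ∉ Set.range α) = (Finset.univ.image α)ᶜ := by
    ext j
    simp
  have hcard : (Finset.univ.filter fun j => j ∉ Set.range α).card = n - k := by
    rw [hcompl, Finset.card_compl, Finset.card_image_of_injective _ hα, Fintype.card_fin,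
      Finset.card_fin]
  rw [complEnum, dif_pos hcard, Finset.range_orderEmbOfFin, hcompl]
  simp

end IncreasingMaps

section Laplace

variable {k n : ℕ} (X : Matrix (Fin n) (Fin n) ℂ)

lemma maskM_eq_blockMask (α β : Fin k → Fin n) :
    maskM X α β = blockMask X (Finset.univ.image α) (Finset.univ.image β) := by
  ext i j
  simp only [maskM, blockMask, Matrix.of_apply, Finset.mem_image, Finset.mem_univ, true_and]
  rw [← ite_not]
  exact if_congr (by tauto) rfl rfl

variable {α : Fin k → Fin n}

lemma dSum_submatrix_delSub {β : Fin k → Fin n} (hα : Function.Injective α)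
    (hβ : Function.Injective β) :
    dSum α β (X.submatrix α β) (delSub X α β) = maskM X α β := by
  ext i j
  simp only [dSum, maskM, delSub, Matrix.of_apply, Matrix.submatrix_apply]
  by_cases hi : ∃ p, α p = i <;> by_cases hj : ∃ q, β q = j
  · rw [dif_pos hi, dif_pos hj, if_neg (by tauto), Classical.choose_spec hi,
      Classical.choose_spec hj]
  · rw [dif_pos hi, dif_neg hj, if_pos (by tauto)]
  · rw [dif_neg hi, dif_pos hj, if_pos (by tauto)]
  · have hi' : ∃ p, complEnum α p = i := (range_complEnum hα).ge hi
    have hj' : ∃ q, complEnum β q = j := (range_complEnum hβ).ge hj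
    rw [dif_neg hi, dif_neg hj, dif_pos hi', dif_pos hj', if_neg (by tauto),
      Classical.choose_spec hi', Classical.choose_spec hj']

lemma imm_eq_sum_imm_maskM (χ : Equiv.Perm (Fin n) → ℂ) (hα : Function.Injective α) :
    imm χ X = ∑ β ∈ Qset k n, imm χ (maskM X α β) := by
  have hcard : (Finset.univ.image α).card = k := by
    rw [Finset.card_image_of_injective _ hα, Finset.card_fin]
  calc imm χ X
      = ∑ t ∈ Finset.univ.powersetCard k, imm χ (blockMask X (Finset.univ.image α) t) :=
        sum_mul_prod_eq_sum_powersetCard_blockMask χ X hcard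
    _ = ∑ β ∈ Qset k n, imm χ (maskM X α β) := by
        simp only [maskM_eq_blockMask]
        exact (sum_Qset_image fun t => imm χ (blockMask X (Finset.univ.image α) t)).symm

theorem immanant_laplace_expansion_general (χ : Equiv.Perm (Fin n) → ℂ)
    (hα : Function.Injective α) :
    imm χ X = ∑ β ∈ Qset k n, imm χ (maskM X α β) ∧
    imm χ X = ∑ β ∈ Qset k n, imm χ (dSum α β (X.submatrix α β) (delSub X α β)) := by
  have hmask := imm_eq_sum_imm_maskM X χ hα
  refine ⟨hmask, hmask.trans (Finset.sum_congr rfl fun β hβ => ?_)⟩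
  rw [dSum_submatrix_delSub X hα (mem_Qset.mp hβ).injective]

end Laplace

/-- Laplace expansion for immanants. For fixed `α ∈ Q_{k,n}`,
`d_χ(X) = ∑_{β ∈ Q_{k,n}} d_χ(X{α|β}) = ∑_{β ∈ Q_{k,n}} d_χ(X[α|β] ⊕_{α|β} X(α|β))`. -/
theorem immanant_laplace_expansion (n k : ℕ) (hk : 1 ≤ k) (hkn : k ≤ n)
    (χ : Equiv.Perm (Fin n) → ℂ) (X : Matrix (Fin n) (Fin n) ℂ)
    (α : Fin k → Fin n) (hα : StrictMono α) :
    imm χ X = ∑ β ∈ Qset k n, imm χ (maskM X α β) ∧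
    imm χ X = ∑ β ∈ Qset k n, imm χ (dSum α β (X.submatrix α β) (delSub X α β)) := by
  exact immanant_laplace_expansion_general X χ hα.injective
end
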